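/- Let (k : K → X, f : X → M) be a Schreier extension with K commutative. Then the relation R_E is symmetric (i.e. (x, z) ∈ R_E implies (z, x) ∈ R_E) if and only if every element of K is invertible (i.e. K is a group). -/

import Mathlib

/-- A monoid extension: `K`, `X` additive monoids (not assumed commutative),
`M` a multiplicative monoid, `k : K → X` an injective monoid homomorphism whose image
is `{x | f x = 1}`, and `f : X → M` a surjective monoid homomorphism. -/
structure MonoidExtension {K X M : Type*} [AddMonoid K] [AddMonoid X] [Monoid M]
    (k : K → X) (f : X → M) : Prop where
  k_add : ∀ a b : K, k (a + b) = k a + k b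
  k_zero : k 0 = 0
  k_inj : Function.Injective k
  ker_eq : ∀ x : X, f x = 1 ↔ x ∈ Set.range k
  f_add : ∀ x y : X, f (x + y) = f x * f y
  f_zero : f 0 = 1
  f_surj : Function.Surjective f

/-- The set `B_m` of representatives of `m`. -/
def Reps {K X M : Type*} [AddMonoid K] [AddMonoid X] [Monoid M]
    (k : K → X) (f : X → M) (m : M) : Set X :=
  {u | f u = m ∧ ∀ x : X, f x = m → ∃! a : K, x = k a + u}

/-- A monoid extension is a Schreier extension if every `m` has a representative. -/
def IsSchreier {K X M : Type*} [AddMonoid K] [AddMonoid X] [Monoid M]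
    (k : K → X) (f : X → M) : Prop :=
  ∀ m : M, (Reps k f m).Nonempty

/-!
`K` acts on `X` by translation through `k`, and `(x, z) ∈ R_E` exactly when `z` lies in the orbit of
`x`. Only the zero of `K` fixes `0 : X`, so an element of `K` that carries `k a` back to `0` is a
left negative of `a`, and a monoid in which every element has a left negative is a group.
-/

theorem isAddUnit_of_forall_exists_add_eq_zero {K : Type*} [AddMonoid K]
    (h : ∀ a : K, ∃ b : K, b + a = 0) (a : K) : IsAddUnit a := by
  obtain ⟨b, hba⟩ := h a
  obtain ⟨c, hcb⟩ := h b
  have hca : c = a := left_neg_eq_right_neg hcb hba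
  exact isAddUnit_iff_exists.mpr ⟨b, hca ▸ hcb, hba⟩

section AddAction

variable {K X : Type*} [AddMonoid K] [AddAction K X]

theorem exists_eq_vadd_vadd_of_isAddUnit {a : K} (ha : IsAddUnit a) (x : X) :
    ∃ b : K, x = b +ᵥ (a +ᵥ x) := by
  obtain ⟨b, hba⟩ := ha.exists_neg'
  exact ⟨b, by rw [vadd_vadd, hba, zero_vadd]⟩

theorem add_eq_zero_of_eq_vadd_vadd {x₀ : X} (hx₀ : ∀ a : K, a +ᵥ x₀ = x₀ → a = 0) {a b : K}
    (h : x₀ = b +ᵥ (a +ᵥ x₀)) : b + a = 0 :=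
  hx₀ (b + a) (by rw [add_vadd, ← h])

theorem RE_symmetric_iff_group_general {x₀ : X} (hx₀ : ∀ a : K, a +ᵥ x₀ = x₀ → a = 0) :
    (∀ x z : X, (∃ a : K, z = a +ᵥ x) → ∃ a : K, x = a +ᵥ z) ↔ ∀ a : K, IsAddUnit a := by
  constructor
  · intro hsymm
    refine isAddUnit_of_forall_exists_add_eq_zero fun a ↦ ?_
    obtain ⟨b, hb⟩ := hsymm x₀ (a +ᵥ x₀) ⟨a, rfl⟩
    exact ⟨b, add_eq_zero_of_eq_vadd_vadd hx₀ hb⟩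
  · rintro hunit x _ ⟨a, rfl⟩
    exact exists_eq_vadd_vadd_of_isAddUnit (hunit a) x

end AddAction

namespace MonoidExtension

variable {K X M : Type*} [AddMonoid K] [AddMonoid X] [Monoid M] {k : K → X} {f : X → M}

/-- The translation action `a +ᵥ x = k a + x` of `K` on `X`, whose orbit relation is `R_E`. It is
not an instance because it depends on `k`. -/
abbrev translationAction (hE : MonoidExtension k f) : AddAction K X where
  vadd a x := k a + x
  zero_vadd x := show k 0 + x = x by rw [hE.k_zero, zero_add]
  add_vadd a b x := show k (a + b) + x = k a + (k b + x) by rw [hE.k_add, add_assoc]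

theorem eq_zero_of_map_eq_zero (hE : MonoidExtension k f) {a : K} (ha : k a = 0) : a = 0 :=
  hE.k_inj (ha.trans hE.k_zero.symm)

end MonoidExtension

/-- Corollary 5.3 (cor:R_E-symmetric), (3) ⇔ (4): for a Schreier extension with `K`
commutative, the relation `R_E` is symmetric if and only if every element of `K` is
invertible (i.e. `K` is a group). -/
theorem RE_symmetric_iff_group {K X M : Type*} [AddCommMonoid K] [AddMonoid X] [Monoid M]
    (k : K → X) (f : X → M) (hE : MonoidExtension k f) (hS : IsSchreier k f) :
    (∀ x z : X, (∃ a : K, z = k a + x) → ∃ a : K, x = k a + z) ↔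
      (∀ a : K, IsAddUnit a) := by
  let := hE.translationAction
  exact RE_symmetric_iff_group_general (x₀ := (0 : X)) fun a ha ↦
    hE.eq_zero_of_map_eq_zero ((add_zero (k a)).symm.trans ha)
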